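/- arXiv:2404.15843 — 4 statements merged into one kernel-verified Lean document; each statement's English description precedes it below -/
import Mathlib

section
/- For every θ ∈ 𝕋, every sample size n, and every α ∈ [0,1], the possibilistic IM contour is valid at θ: P_θ^n{ x^n ∈ 𝕏^n : π_{x^n}(θ) ≤ α } ≤ α. -/
open MeasureTheory

/-- Likelihood of an iid sample: `L_{x^n}(θ) = ∏ᵢ p_θ(xᵢ)`. -/
noncomputable def likelihood {𝕏 𝕋 : Type*} (p : 𝕋 → 𝕏 → ℝ) {n : ℕ}
    (xn : Fin n → 𝕏) (θ : 𝕋) : ℝ :=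
  ∏ i, p θ (xn i)

/-- Relative likelihood: `R(x^n, θ) = L_{x^n}(θ) / sup_ϑ L_{x^n}(ϑ)`. -/
noncomputable def relLik {𝕏 𝕋 : Type*} (p : 𝕋 → 𝕏 → ℝ) {n : ℕ}
    (xn : Fin n → 𝕏) (θ : 𝕋) : ℝ :=
  likelihood p xn θ / ⨆ ϑ, likelihood p xn ϑ

/-- Possibilistic IM contour: `π_{x^n}(θ) = P_θ^n{ R(X^n, θ) ≤ R(x^n, θ) }`. -/
noncomputable def contour {𝕏 𝕋 : Type*} [MeasurableSpace 𝕏]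
    (P : 𝕋 → Measure 𝕏) (p : 𝕋 → 𝕏 → ℝ) {n : ℕ}
    (xn : Fin n → 𝕏) (θ : 𝕋) : ℝ :=
  ((Measure.pi fun _ : Fin n => P θ) {y | relLik p y θ ≤ relLik p xn θ}).toReal

/-!
The contour at `x` is the `P_θ^n`-mass of the sublevel set of `R(·, θ)` through `x`, and sublevel
sets are nested. Those of mass at most `α` therefore form a chain, which has a countable cofinal
subfamily because `ℝ` is second countable. The event `π ≤ α` is covered by this subfamily, and
continuity from below bounds the mass of its union by `α`.
-/

open Set

theorem exists_countable_subset_isCofinalFor {β : Type*} [LinearOrder β] [TopologicalSpace β]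
    [ClosedIciTopology β] [SecondCountableTopology β] (s : Set β) :
    ∃ t ⊆ s, t.Countable ∧ IsCofinalFor s t := by
  by_cases hmax : ∃ m, IsGreatest s m
  · obtain ⟨m, hms, hm⟩ := hmax
    exact ⟨{m}, singleton_subset_iff.2 hms, countable_singleton m, fun x hx => ⟨m, rfl, hm hx⟩⟩
  · obtain ⟨t, hts, htc, hcover⟩ :=
      TopologicalSpace.isOpen_biUnion_countable s Iio fun _ _ => isOpen_Iio
    refine ⟨t, hts, htc, fun x hx => ?_⟩
    obtain ⟨y, hys, hxy⟩ : ∃ y ∈ s, x < y := by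
      by_contra! h
      exact hmax ⟨x, hx, h⟩
    have hxt : x ∈ ⋃ z ∈ t, Iio z := hcover ▸ mem_biUnion hys hxy
    obtain ⟨z, hzt, hxz⟩ := mem_iUnion₂.1 hxt
    exact ⟨z, hzt, hxz.le⟩

section Sublevel

variable {Ω β : Type*} [MeasurableSpace Ω] [LinearOrder β] [TopologicalSpace β]
  [ClosedIciTopology β] [SecondCountableTopology β]

theorem measure_setOf_measure_sublevel_le_le (ν : Measure Ω) (R : Ω → β) (a : ENNReal) :
    ν {x | ν {y | R y ≤ R x} ≤ a} ≤ a := by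
  obtain ⟨t, hts, htc, hcofinal⟩ :=
    exists_countable_subset_isCofinalFor (R '' {x | ν {y | R y ≤ R x} ≤ a})
  have hcover : {x | ν {y | R y ≤ R x} ≤ a} ⊆ ⋃ b ∈ t, {y | R y ≤ b} := fun x hx =>
    let ⟨b, hbt, hxb⟩ := hcofinal (mem_image_of_mem R hx)
    mem_biUnion hbt hxb
  have hmono : Monotone fun b => {y | R y ≤ b} := fun _ _ hbc _ hy => le_trans hy hbc
  calc ν {x | ν {y | R y ≤ R x} ≤ a}
      ≤ ν (⋃ b ∈ t, {y | R y ≤ b}) := measure_mono hcover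
    _ = ⨆ b ∈ t, ν {y | R y ≤ b} :=
        measure_biUnion_eq_iSup htc ((DirectedOn.of_linearOrder t).mono fun _ _ h => hmono h)
    _ ≤ a := iSup₂_le fun b hb => by
        obtain ⟨x, hx, rfl⟩ := hts hb
        exact hx

theorem im_contour_valid_general (ν : Measure Ω) [IsFiniteMeasure ν] (R : Ω → β) (α : ℝ) :
    ν {x | ν.real {y | R y ≤ R x} ≤ α} ≤ ENNReal.ofReal α := by
  refine (measure_mono fun x hx => ?_).trans
    (measure_setOf_measure_sublevel_le_le ν R (ENNReal.ofReal α))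
  calc ν {y | R y ≤ R x}
      = ENNReal.ofReal (ν.real {y | R y ≤ R x}) := (ofReal_measureReal (measure_ne_top ν _)).symm
    _ ≤ ENNReal.ofReal α := ENNReal.ofReal_le_ofReal hx

end Sublevel

/-- validity of the possibilistic IM contour:
`P_θ^n{ x^n : π_{x^n}(θ) ≤ α } ≤ α` for all `θ`, `n`, and `α ∈ [0,1]`. -/
theorem im_contour_valid {𝕏 𝕋 : Type*} [MeasurableSpace 𝕏]
    (μ : Measure 𝕏) [SigmaFinite μ]
    (P : 𝕋 → Measure 𝕏) [∀ θ, IsProbabilityMeasure (P θ)]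
    (p : 𝕋 → 𝕏 → ℝ)
    (hdensity : ∀ θ, P θ = μ.withDensity fun x => ENNReal.ofReal (p θ x))
    (hsup_pos : ∀ (n : ℕ) (xn : Fin n → 𝕏), 0 < ⨆ ϑ, likelihood p xn ϑ)
    (hsup_fin : ∀ (n : ℕ) (xn : Fin n → 𝕏),
      BddAbove (Set.range fun ϑ => likelihood p xn ϑ))
    (hmeas : ∀ (n : ℕ) (θ : 𝕋), Measurable fun xn : Fin n → 𝕏 => relLik p xn θ)
    (θ : 𝕋) (n : ℕ) (α : ℝ) (hα0 : 0 ≤ α) (hα1 : α ≤ 1) :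
    (Measure.pi fun _ : Fin n => P θ) {xn | contour P p xn θ ≤ α}
      ≤ ENNReal.ofReal α :=
  im_contour_valid_general (Measure.pi fun _ : Fin n => P θ) (fun xn => relLik p xn θ) α
end

section
/- For every α ∈ [0,1], the set C_α(x^n) = { θ ∈ 𝕋 : π_{x^n}(θ) > α } is a 100(1−α)% frequentist confidence set: for every θ ∈ 𝕋 and every n, P_θ^n{ x^n : θ ∈ C_α(x^n) } ≥ 1 − α. -/
open MeasureTheory

/-!
Fix `θ`. If `S` is the set of values `t` of the ranking statistic `T` whose distribution function
`F t = P (T ≤ t)` is at most `α`, then `S` is a lower set, so `{T ∈ S}` is the increasing union of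
the events `{T ≤ t}` with `t ∈ S`. A countable cofinal subset of `S` suffices here, so continuity
from below gives `P (F ∘ T ≤ α) = P (T ∈ S) = sup_{t ∈ S} F t ≤ α`. The event that `θ` is covered
is the complement of `{F ∘ T ≤ α}`.
-/

section RankingStatistic

open scoped ENNReal

variable {Ω L : Type*} [MeasurableSpace Ω]
  [LinearOrder L] [TopologicalSpace L] [OrderTopology L] [SecondCountableTopology L]

theorem measure_preimage_eq_iSup_measure_preimage_Iic (ν : Measure Ω) (T : Ω → L) {s : Set L}
    (hs : IsLowerSet s) : ν (T ⁻¹' s) = ⨆ t : s, ν (T ⁻¹' Set.Iic (t : L)) := by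
  -- `s` then carries the order topology, which makes `atTop` on `s` countably generated.
  have : s.OrdConnected := hs.ordConnected
  have exhaust : T ⁻¹' s = ⋃ t : s, T ⁻¹' Set.Iic (t : L) := by
    rw [← Set.preimage_iUnion, Set.iUnion_coe_set, ← coe_lowerClosure, hs.lowerClosure]
  have mono : Monotone fun t : s => T ⁻¹' Set.Iic (t : L) := fun _ _ hle =>
    Set.preimage_mono (Set.Iic_subset_Iic.mpr hle)
  rw [exhaust, mono.measure_iUnion]

theorem measure_setOfPred_measure_setOfPred_le_le (ν : Measure Ω) (T : Ω → L) (a : ℝ≥0∞) :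
    ν {x | ν {y | T y ≤ T x} ≤ a} ≤ a := by
  have lower : IsLowerSet {t | ν (T ⁻¹' Set.Iic t) ≤ a} := fun _ _ hle ht =>
    (measure_mono (Set.preimage_mono (Set.Iic_subset_Iic.mpr hle))).trans ht
  calc ν {x | ν {y | T y ≤ T x} ≤ a}
      = ⨆ t : {t | ν (T ⁻¹' Set.Iic t) ≤ a}, ν (T ⁻¹' Set.Iic (t : L)) :=
        measure_preimage_eq_iSup_measure_preimage_Iic ν T lower
    _ ≤ a := iSup_le fun t => t.2

theorem one_sub_le_measure_setOfPred_lt_measure_setOfPred_le (ν : Measure Ω)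
    [IsProbabilityMeasure ν] (T : Ω → L) (a : ℝ≥0∞) : 1 - a ≤ ν {x | a < ν {y | T y ≤ T x}} := by
  have cover : {x | ν {y | T y ≤ T x} ≤ a} ∪ {x | a < ν {y | T y ≤ T x}} = Set.univ :=
    Set.eq_univ_of_forall fun x => le_or_gt (ν {y | T y ≤ T x}) a
  refine tsub_le_iff_left.mpr ?_
  calc 1 = ν Set.univ := measure_univ.symm
    _ ≤ ν {x | ν {y | T y ≤ T x} ≤ a} + ν {x | a < ν {y | T y ≤ T x}} :=
        cover ▸ measure_union_le _ _
    _ ≤ a + ν {x | a < ν {y | T y ≤ T x}} := by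
        gcongr
        exact measure_setOfPred_measure_setOfPred_le_le ν T a

theorem im_confidence_set_general {𝕋 : Type*} (P : 𝕋 → Measure Ω)
    [∀ θ, IsProbabilityMeasure (P θ)] (R : Ω → 𝕋 → L) {α : ℝ} (hα : 0 ≤ α) (θ : 𝕋) :
    ENNReal.ofReal (1 - α)
      ≤ P θ {x | θ ∈ {ϑ | α < (P ϑ {y | R y ϑ ≤ R x ϑ}).toReal}} := by
  simp only [Set.mem_ofPred_eq, ← ENNReal.ofReal_lt_iff_lt_toReal hα (measure_ne_top _ _)]
  rw [ENNReal.ofReal_sub 1 hα, ENNReal.ofReal_one]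
  exact one_sub_le_measure_setOfPred_lt_measure_setOfPred_le (P θ) (R · θ) (ENNReal.ofReal α)

end RankingStatistic

/-- the IM plausibility region
`C_α(x^n) = { θ : π_{x^n}(θ) > α }` is a `100(1−α)%` confidence set:
`P_θ^n{ x^n : θ ∈ C_α(x^n) } ≥ 1 − α` for all `θ` and `n`. -/
theorem im_confidence_set {𝕏 𝕋 : Type*} [MeasurableSpace 𝕏]
    (μ : Measure 𝕏) [SigmaFinite μ]
    (P : 𝕋 → Measure 𝕏) [∀ θ, IsProbabilityMeasure (P θ)]
    (p : 𝕋 → 𝕏 → ℝ)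
    (hdensity : ∀ θ, P θ = μ.withDensity fun x => ENNReal.ofReal (p θ x))
    (hsup_pos : ∀ (m : ℕ) (xn : Fin m → 𝕏), 0 < ⨆ ϑ, likelihood p xn ϑ)
    (hsup_fin : ∀ (m : ℕ) (xn : Fin m → 𝕏),
      BddAbove (Set.range fun ϑ => likelihood p xn ϑ))
    (hmeas : ∀ (m : ℕ) (θ : 𝕋), Measurable fun xn : Fin m → 𝕏 => relLik p xn θ)
    (α : ℝ) (hα0 : 0 ≤ α) (hα1 : α ≤ 1) (θ : 𝕋) (n : ℕ) :
    ENNReal.ofReal (1 - α)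
      ≤ (Measure.pi fun _ : Fin n => P θ) {xn | θ ∈ {ϑ | α < contour P p xn ϑ}} :=
  im_confidence_set_general (fun ϑ => Measure.pi fun _ : Fin n => P ϑ) (relLik p) hα0 θ
end

section
/- Minimality of the probability-to-possibility transform: let q : 𝕑 → [0,1] be any function that (i) is order-consistent with the density p, meaning p(z) ≤ p(z') implies q(z) ≤ q(z'), and (ii) dominates P, meaning P(B) ≤ sup_{z∈B} q(z) for every measurable B ⊆ 𝕑. Then π(z) ≤ q(z) for every z ∈ 𝕑; that is, among order-consistent contours whose credal sets contain P, the probability-to-possibility transform π is pointwise smallest. -/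
open MeasureTheory

/-- Probability-to-possibility transform of `P` with density `p`:
`π(z) = P{ z' : p(z') ≤ p(z) }`. -/
noncomputable def probToPoss {𝕑 : Type*} [MeasurableSpace 𝕑]
    (P : Measure 𝕑) (p : 𝕑 → ℝ) (z : 𝕑) : ℝ :=
  (P {w | p w ≤ p z}).toReal

/-- For real suprema, indices outside `s` contribute the junk value `sSup ∅ = 0`. -/
theorem real_biSup_le {ι : Type*} {s : Set ι} {f : ι → ℝ} {a : ℝ}
    (ha : 0 ≤ a) (hf : ∀ i ∈ s, f i ≤ a) : ⨆ i ∈ s, f i ≤ a :=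
  Real.iSup_le (fun i => Real.iSup_le (hf i) ha) ha

/-- minimality of the probability-to-possibility transform: if
`q : 𝕑 → [0,1]` is order-consistent with the density `p` and its possibility
measure dominates `P`, then `π ≤ q` pointwise. -/
theorem probToPoss_minimal {𝕑 : Type*} [MeasurableSpace 𝕑]
    (μ : Measure 𝕑) [SigmaFinite μ]
    (P : Measure 𝕑) [IsProbabilityMeasure P]
    (p : 𝕑 → ℝ) (hp : Measurable p)
    (hdensity : P = μ.withDensity fun z => ENNReal.ofReal (p z))
    (q : 𝕑 → ℝ) (hq01 : ∀ z, q z ∈ Set.Icc (0 : ℝ) 1)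
    (horder : ∀ z z', p z ≤ p z' → q z ≤ q z')
    (hdom : ∀ B : Set 𝕑, MeasurableSet B → (P B).toReal ≤ ⨆ z ∈ B, q z) :
    ∀ z, probToPoss P p z ≤ q z := by
  intro z
  have hmeas : MeasurableSet {w | p w ≤ p z} := measurableSet_le hp measurable_const
  calc probToPoss P p z ≤ ⨆ w ∈ {w | p w ≤ p z}, q w := hdom _ hmeas
    _ ≤ q z := real_biSup_le (hq01 z).1 fun w hw => horder w z hw
end

section
/- In the Gaussian location model the IM contour evaluated at the true parameter is exactly uniformly distributed: if X_1,…,X_n are iid N(Θ, σ²) with σ² > 0 known, then under P_Θ^n the random variable π_{X^n}(Θ) has the Uniform(0,1) distribution, for every n. -/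
open MeasureTheory ProbabilityTheory

/-
The contour at `θ` is the distribution function of the random variable `R(X^n, θ)` evaluated at
`R(X^n, θ)` itself. By the probability integral transform it is uniform as soon as the law of
`R(X^n, θ)` has no point mass. In the Gaussian model
`R(x^n, θ) = exp (-n (x̄ - θ)² / (2σ²))` with `x̄ ~ N(θ, σ²/n)`; since this function of `x̄` takes
each value at most twice, its law inherits the absence of point masses from that of `x̄`.
-/

open Set
open scoped BigOperators

section ProbabilityIntegralTransform

lemma exists_preimage_Iic_eq_Iic_of_monotone {α β : Type*} [ConditionallyCompleteLinearOrder α]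
    [TopologicalSpace α] [OrderTopology α] [DenselyOrdered α] [LinearOrder β] [TopologicalSpace β]
    [OrderClosedTopology β] {f : α → β} (hf : Continuous f) (hmono : Monotone f) {u : β}
    (hlow : ∃ a, f a ≤ u) (hhigh : ∃ b, u < f b) :
    ∃ t, f t = u ∧ f ⁻¹' Iic u = Iic t := by
  obtain ⟨b, hb⟩ := hhigh
  obtain ⟨s, hs⟩ := mem_range_of_exists_le_of_exists_ge hf hlow ⟨b, hb.le⟩
  have hbdd : BddAbove (f ⁻¹' Iic u) := ⟨b, fun x hx => (hmono.reflect_lt (hx.trans_lt hb)).le⟩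
  obtain ⟨t, ht_mem, ht_ub⟩ : ∃ t, IsGreatest (f ⁻¹' Iic u) t :=
    ⟨_, (isClosed_Iic.preimage hf).isGreatest_csSup ⟨s, hs.le⟩ hbdd⟩
  refine ⟨t, le_antisymm ht_mem (hs ▸ hmono (ht_ub hs.le)), ?_⟩
  exact Subset.antisymm ht_ub fun x hx => (hmono hx).trans ht_mem

variable (ν : Measure ℝ) [IsProbabilityMeasure ν] [NullSingletonClass ν]

lemma continuous_cdf : Continuous (cdf ν) := by
  refine continuous_iff_continuousAt.2 fun a => ?_
  rw [(monotone_cdf ν).continuousAt_iff_leftLim_eq_rightLim, StieltjesFunction.rightLim_eq]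
  have hjump : ENNReal.ofReal (cdf ν a - Function.leftLim (cdf ν) a) = 0 := by
    rw [← StieltjesFunction.measure_singleton, measure_cdf, measure_singleton]
  exact le_antisymm ((monotone_cdf ν).leftLim_le le_rfl)
    (sub_nonpos.1 (ENNReal.ofReal_eq_zero.1 hjump))

lemma measure_preimage_cdf_Iic (u : ℝ) :
    ν (cdf ν ⁻¹' Iic u) = ENNReal.ofReal (min 1 u) := by
  rcases le_or_gt 1 u with hu | hu
  · have huniv : cdf ν ⁻¹' Iic u = univ := eq_univ_of_forall fun x => (cdf_le_one ν x).trans hu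
    simp [huniv, hu]
  rw [min_eq_right hu.le]
  by_cases hlow : ∃ a, cdf ν a ≤ u
  · have hhigh : ∃ b, u < cdf ν b := ((tendsto_cdf_atTop ν).eventually_const_lt hu).exists
    obtain ⟨t, rfl, ht⟩ :=
      exists_preimage_Iic_eq_Iic_of_monotone (continuous_cdf ν) (monotone_cdf ν) hlow hhigh
    rw [ht, ofReal_cdf]
  · push Not at hlow
    have hempty : cdf ν ⁻¹' Iic u = ∅ := eq_empty_of_forall_notMem fun x => (hlow x).not_ge
    have hu_nonpos : u ≤ 0 := ge_of_tendsto' (tendsto_cdf_atBot ν) fun x => (hlow x).le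
    rw [hempty, measure_empty, ENNReal.ofReal_of_nonpos hu_nonpos]

theorem map_cdf_eq_restrict_volume_Icc : ν.map (cdf ν) = volume.restrict (Icc (0 : ℝ) 1) := by
  have hmeas : Measurable (cdf ν) := (monotone_cdf ν).measurable
  have := Measure.isProbabilityMeasure_map (μ := ν) hmeas.aemeasurable
  refine Measure.ext_of_Iic _ _ fun u => ?_
  have hinter : Iic u ∩ Icc (0 : ℝ) 1 = Icc 0 (min 1 u) := by
    rw [inter_comm, ← Ici_inter_Iic, inter_assoc, Iic_inter_Iic, Ici_inter_Iic]
  rw [Measure.map_apply hmeas measurableSet_Iic, measure_preimage_cdf_Iic,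
    Measure.restrict_apply measurableSet_Iic, hinter, Real.volume_Icc, sub_zero]

end ProbabilityIntegralTransform

section Contour

variable {𝕏 𝕋 : Type*} [MeasurableSpace 𝕏] {P : 𝕋 → Measure 𝕏} {p : 𝕋 → 𝕏 → ℝ} {n : ℕ} {θ : 𝕋}
  [IsProbabilityMeasure (P θ)]

lemma contour_eq_cdf_relLik
    (hR : AEMeasurable (fun x : Fin n → 𝕏 => relLik p x θ) (Measure.pi fun _ => P θ))
    (x : Fin n → 𝕏) :
    contour P p x θ =
      cdf ((Measure.pi fun _ : Fin n => P θ).map fun y => relLik p y θ) (relLik p x θ) := by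
  have := Measure.isProbabilityMeasure_map hR
  rw [cdf_eq_real, map_measureReal_apply_of_aemeasurable hR measurableSet_Iic]
  rfl

theorem map_contour_eq_restrict_volume_Icc
    (hR : AEMeasurable (fun x : Fin n → 𝕏 => relLik p x θ) (Measure.pi fun _ => P θ))
    [NullSingletonClass ((Measure.pi fun _ : Fin n => P θ).map fun x => relLik p x θ)] :
    (Measure.pi fun _ : Fin n => P θ).map (fun x => contour P p x θ) =
      volume.restrict (Icc (0 : ℝ) 1) := by
  have := Measure.isProbabilityMeasure_map hR
  simp_rw [contour_eq_cdf_relLik hR]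
  rw [← map_cdf_eq_restrict_volume_Icc
      ((Measure.pi fun _ : Fin n => P θ).map fun x => relLik p x θ),
    AEMeasurable.map_map_of_aemeasurable (monotone_cdf _).measurable.aemeasurable hR]
  rfl

end Contour

lemma nullSingletonClass_map_of_countable_fibers {α β : Type*} [MeasurableSpace α]
    [MeasurableSpace β] [MeasurableSingletonClass β] {μ : Measure α} [NullSingletonClass μ]
    {f : α → β} (hf : AEMeasurable f μ) (hfib : ∀ b, (f ⁻¹' {b}).Countable) :
    NullSingletonClass (μ.map f) where
  measure_singleton b := by
    rw [Measure.map_apply_of_aemeasurable hf (measurableSet_singleton b), (hfib b).measure_zero]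

lemma finite_preimage_exp_neg_mul_sq {c : ℝ} (hc : c ≠ 0) (θ y : ℝ) :
    ((fun s => Real.exp (-(c * (s - θ) ^ 2))) ⁻¹' {y}).Finite := by
  refine (toFinite {θ + √(-Real.log y / c), θ - √(-Real.log y / c)}).subset ?_
  rintro s rfl
  have hsq : -Real.log (Real.exp (-(c * (s - θ) ^ 2))) / c = (s - θ) ^ 2 := by
    rw [Real.log_exp, neg_neg, mul_div_cancel_left₀ _ hc]
  simp only [hsq, Real.sqrt_sq_eq_abs, mem_insert_iff, mem_singleton_iff]
  rcases abs_choice (s - θ) with h | h <;> simp [h]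

section SampleMean

variable {ι : Type*} [Fintype ι]

lemma sum_sub_sq_eq_sum_sub_expect_sq_add {K : Type*} [Field K] [CharZero K] (x : ι → K) (a : K) :
    ∑ i, (x i - a) ^ 2 =
      ∑ i, (x i - 𝔼 j, x j) ^ 2 + Fintype.card ι * ((𝔼 j, x j) - a) ^ 2 := by
  have hcross : ∑ i, (x i - 𝔼 j, x j) = 0 := by
    simp [Finset.sum_sub_distrib, Fintype.card_mul_expect]
  calc
    ∑ i, (x i - a) ^ 2 = ∑ i, ((x i - 𝔼 j, x j) ^ 2 +
        2 * ((𝔼 j, x j) - a) * (x i - 𝔼 j, x j) + ((𝔼 j, x j) - a) ^ 2) :=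
      Finset.sum_congr rfl fun i _ => by ring
    _ = _ := by simp [Finset.sum_add_distrib, ← Finset.mul_sum, hcross]

lemma map_sum_pi_gaussianReal (m : ι → ℝ) (v : ι → NNReal) :
    (Measure.pi fun i => gaussianReal (m i) (v i)).map (fun x => ∑ i, x i) =
      gaussianReal (∑ i, m i) (∑ i, v i) := by
  set μ := Measure.pi fun i => gaussianReal (m i) (v i)
  have heval (i : ι) : HasGaussianLaw (fun x : ι → ℝ => x i) μ :=
    ⟨(measurePreserving_eval (fun i => gaussianReal (m i) (v i)) i).map_eq ▸ inferInstance⟩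
  have hindep : iIndepFun (fun i (x : ι → ℝ) => x i) μ :=
    iIndepFun_pi (μ := fun i => gaussianReal (m i) (v i)) (X := fun _ => id)
      fun _ => aemeasurable_id
  have hmean : ∫ x, ∑ i, x i ∂μ = ∑ i, m i := by
    rw [integral_finsetSum _ fun i _ => (heval i).integrable]
    exact Finset.sum_congr rfl fun i _ =>
      (integral_comp_eval (μ := fun i => gaussianReal (m i) (v i)) (f := id)
        aestronglyMeasurable_id).trans integral_id_gaussianReal
  have hvar : Var[fun x => ∑ i, x i; μ] = ∑ i, (v i : ℝ) := by
    have := variance_sum_pi (X := fun _ => id)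
      fun i => memLp_id_gaussianReal (μ := m i) (v := v i) 2
    simpa [μ, Finset.sum_fn] using this
  rw [(hindep.hasGaussianLaw heval).fun_sum.map_eq_gaussianReal, hmean, hvar, ← NNReal.coe_sum,
    Real.toNNReal_coe]

lemma map_expect_pi_gaussianReal [Nonempty ι] (m : ℝ) (v : NNReal) :
    (Measure.pi fun _ : ι => gaussianReal m v).map (fun x => 𝔼 i, x i) =
      gaussianReal m (v / Fintype.card ι) := by
  have hcard : (Fintype.card ι : ℝ) ≠ 0 := by positivity
  simp_rw [Fintype.expect_eq_sum_div_card]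
  rw [← Function.comp_def (· / (Fintype.card ι : ℝ)), ← Measure.map_map (by fun_prop) (by fun_prop),
    map_sum_pi_gaussianReal, gaussianReal_map_div_const]
  congr 1
  · simp [hcard]
  · ext
    simp only [Finset.sum_const, Finset.card_univ, nsmul_eq_mul, NNReal.coe_div, NNReal.coe_mul,
      NNReal.coe_natCast, NNReal.coe_mk]
    field_simp

end SampleMean

section GaussianLocation

variable {n : ℕ}

lemma likelihood_gaussianPDFReal_eq_mul_exp (v : NNReal) (x : Fin n → ℝ) (θ : ℝ) :
    likelihood (fun t => gaussianPDFReal t v) x θ =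
      likelihood (fun t => gaussianPDFReal t v) x (𝔼 i, x i) *
        Real.exp (-(n / (2 * v) * ((𝔼 i, x i) - θ) ^ 2)) := by
  simp only [likelihood, gaussianPDFReal, Finset.prod_mul_distrib, ← Real.exp_sum,
    ← Finset.sum_div, Finset.sum_neg_distrib]
  rw [mul_assoc (Finset.prod _ _), ← Real.exp_add, sum_sub_sq_eq_sum_sub_expect_sq_add x θ,
    Fintype.card_fin]
  congr 2
  ring

lemma iSup_likelihood_gaussianPDFReal (v : NNReal) (x : Fin n → ℝ) :
    ⨆ θ, likelihood (fun t => gaussianPDFReal t v) x θ =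
      likelihood (fun t => gaussianPDFReal t v) x (𝔼 i, x i) := by
  refine IsGreatest.csSup_eq ⟨mem_range_self _, forall_mem_range.2 fun θ => ?_⟩
  rw [likelihood_gaussianPDFReal_eq_mul_exp]
  refine mul_le_of_le_one_right (Finset.prod_nonneg fun i _ => gaussianPDFReal_nonneg _ _ _) ?_
  exact Real.exp_le_one_iff.2 (neg_nonpos.2 (by positivity))

lemma relLik_gaussianPDFReal {v : NNReal} (hv : v ≠ 0) (x : Fin n → ℝ) (θ : ℝ) :
    relLik (fun t => gaussianPDFReal t v) x θ =
      Real.exp (-(n / (2 * v) * ((𝔼 i, x i) - θ) ^ 2)) := by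
  have hpos : 0 < likelihood (fun t => gaussianPDFReal t v) x (𝔼 i, x i) :=
    Finset.prod_pos fun i _ => gaussianPDFReal_pos _ _ _ hv
  rw [relLik, iSup_likelihood_gaussianPDFReal, likelihood_gaussianPDFReal_eq_mul_exp,
    mul_div_cancel_left₀ _ hpos.ne']

lemma measurable_relLik_gaussianPDFReal {v : NNReal} (hv : v ≠ 0) (θ : ℝ) :
    Measurable fun x : Fin n → ℝ => relLik (fun t => gaussianPDFReal t v) x θ := by
  simp_rw [relLik_gaussianPDFReal hv, Fintype.expect_eq_sum_div_card]
  fun_prop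

lemma nullSingletonClass_map_relLik_gaussianPDFReal [NeZero n] {v : NNReal} (hv : v ≠ 0)
    (m θ : ℝ) :
    NullSingletonClass ((Measure.pi fun _ : Fin n => gaussianReal m v).map
      fun x => relLik (fun t => gaussianPDFReal t v) x θ) := by
  have hmean : Measurable fun x : Fin n → ℝ => 𝔼 i, x i := by
    simp_rw [Fintype.expect_eq_sum_div_card]
    fun_prop
  have hcoef : (n / (2 * v) : ℝ) ≠ 0 := by
    have := NeZero.ne n
    positivity
  have hvar : v / Fintype.card (Fin n) ≠ 0 := by simp [hv, NeZero.ne n]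
  have := nullSingletonClass_gaussianReal (μ := m) hvar
  simp_rw [relLik_gaussianPDFReal hv]
  rw [← Function.comp_def (fun s => Real.exp (-(n / (2 * v) * (s - θ) ^ 2))),
    ← Measure.map_map (by fun_prop) hmean, map_expect_pi_gaussianReal]
  exact nullSingletonClass_map_of_countable_fibers (by fun_prop) fun y =>
    (finite_preimage_exp_neg_mul_sq hcoef θ y).countable

end GaussianLocation

/-- in the Gaussian location model `N(Θ, σ²)` with `σ² = v > 0`
known, the IM contour evaluated at the true parameter is exactly uniformly
distributed: under `P_Θ^n`, the random variable `π_{X^n}(Θ)` has the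
Uniform(0,1) distribution, for every `n ≥ 1`. -/
theorem gaussian_location_im_contour_uniform (v : NNReal) (hv : 0 < v)
    (Θ : ℝ) (n : ℕ) (hn : 0 < n) :
    (Measure.pi fun _ : Fin n => gaussianReal Θ v).map
        (fun xn =>
          contour (fun t => gaussianReal t v) (fun t x => gaussianPDFReal t v x) xn Θ)
      = volume.restrict (Set.Icc (0 : ℝ) 1) := by
  have : NeZero n := ⟨hn.ne'⟩
  have := nullSingletonClass_map_relLik_gaussianPDFReal (n := n) hv.ne' Θ Θ
  exact map_contour_eq_restrict_volume_Icc (P := fun t => gaussianReal t v)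
    (measurable_relLik_gaussianPDFReal hv.ne' Θ).aemeasurable
end
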